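/- Let (X,T) be a topological dynamical system with a compatible metric d, let μ be a T-invariant Borel probability measure, let ε>0, and let P be a finite Borel partition of X with diam P ≤ ε. Then for every s>0, R_{μ,L∞}(2ε,s) ≤ h_μ(T,P). -/

import Mathlib

open Filter MeasureTheory Set
open scoped ENNReal Topology

noncomputable section

namespace MMD

variable {X : Type*}

/-- The `n`-th Bowen metric `d_n(x,y) = max_{0 ≤ j ≤ n-1} d(T^j x, T^j y)`. -/
noncomputable def bowenDist [PseudoMetricSpace X] (T : X → X) (n : ℕ) (x y : X) : ℝ :=
  ⨆ j : Fin n, dist (T^[(j : ℕ)] x) (T^[(j : ℕ)] y)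

/-- `r_n(T,d,ε,Z)`: minimal cardinality of an `(n,ε)`-spanning set of `Z`. -/
noncomputable def spanNum [PseudoMetricSpace X] (T : X → X) (n : ℕ) (ε : ℝ) (Z : Set X) : ℕ :=
  sInf {k | ∃ E : Finset X, E.card = k ∧ ∀ z ∈ Z, ∃ y ∈ E, bowenDist T n z y < ε}

/-- `s_n(T,d,ε,Z)`: maximal cardinality of an `(n,ε)`-separated subset of `Z`. -/
noncomputable def sepNum [PseudoMetricSpace X] (T : X → X) (n : ℕ) (ε : ℝ) (Z : Set X) : ℕ :=
  sSup {k | ∃ F : Finset X, ↑F ⊆ Z ∧ F.card = k ∧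
    ∀ x ∈ F, ∀ y ∈ F, x ≠ y → ε ≤ bowenDist T n x y}

/-- `limsup_{n→∞} (1/n) log r_n(T,d,ε,X)`. -/
noncomputable def spanGrowth [PseudoMetricSpace X] (T : X → X) (ε : ℝ) : ℝ≥0∞ :=
  Filter.limsup (fun n : ℕ => ENNReal.ofReal (Real.log (spanNum T n ε Set.univ)) / (n : ℝ≥0∞))
    Filter.atTop

/-- Upper metric mean dimension. -/
noncomputable def mdimMUpper [PseudoMetricSpace X] (T : X → X) : ℝ≥0∞ :=
  Filter.limsup (fun ε : ℝ => spanGrowth T ε / ENNReal.ofReal (Real.log (1 / ε)))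
    (nhdsWithin 0 (Set.Ioi 0))

/-- Lower metric mean dimension. -/
noncomputable def mdimMLower [PseudoMetricSpace X] (T : X → X) : ℝ≥0∞ :=
  Filter.liminf (fun ε : ℝ => spanGrowth T ε / ENNReal.ofReal (Real.log (1 / ε)))
    (nhdsWithin 0 (Set.Ioi 0))

/-- A finite (Borel) partition given as a finite set of measurable, pairwise disjoint sets
covering the space. -/
def IsFinPartition {Y : Type*} [MeasurableSpace Y] (P : Finset (Set Y)) : Prop :=
  (∀ s ∈ P, MeasurableSet s) ∧ (∀ s ∈ P, ∀ t ∈ P, s ≠ t → Disjoint s t) ∧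
    ⋃₀ (P : Set (Set Y)) = Set.univ

/-- Mutual information `I(ξ;η)` of two random variables, as the supremum over finite
measurable partitions of the target spaces. -/
noncomputable def mutualInfo {Ω A B : Type*} [MeasurableSpace Ω] [MeasurableSpace A]
    [MeasurableSpace B] (P : Measure Ω) (ξ : Ω → A) (η : Ω → B) : ℝ≥0∞ :=
  ⨆ (p : Finset (Set A)) (_ : IsFinPartition p) (q : Finset (Set B)) (_ : IsFinPartition q),
    ENNReal.ofReal (∑ s ∈ p, ∑ t ∈ q,
      (P (ξ ⁻¹' s ∩ η ⁻¹' t)).toReal *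
        Real.log ((P (ξ ⁻¹' s ∩ η ⁻¹' t)).toReal /
          ((P (ξ ⁻¹' s)).toReal * (P (η ⁻¹' t)).toReal)))

/-- The `L^∞` rate distortion function `R_{μ,L∞}(ε,s)`: the infimum of `I(ξ;η)/n` over all
`n ≥ 1` and all joint distributions `ν` of `(ξ, (η_0,…,η_{n-1}))` such that `ξ` has law `μ`,
the `η_k` take (almost surely) finitely many values, and
`E(#{0 ≤ k ≤ n-1 : d(T^k ξ, η_k) ≥ ε}) < s n`. -/
noncomputable def RDistLInftyS [PseudoMetricSpace X] [MeasurableSpace X] (T : X → X)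
    (μ : Measure X) (ε s : ℝ) : ℝ≥0∞ :=
  ⨅ (n : ℕ) (_ : 0 < n) (ν : Measure (X × (Fin n → X))) (_ : IsProbabilityMeasure ν)
    (_ : ν.map Prod.fst = μ) (_ : ∃ S : Finset X, ν {p | ∀ k, p.2 k ∈ S} = 1)
    (_ : ∫⁻ p, (Nat.card {k : Fin n // ε ≤ dist (T^[(k : ℕ)] p.1) (p.2 k)} : ℝ≥0∞) ∂ν
        < ENNReal.ofReal (s * n)),
    mutualInfo ν Prod.fst Prod.snd / (n : ℝ≥0∞)

/-- `R_{μ,L∞}(ε) = lim_{s→0} R_{μ,L∞}(ε,s)` (the limit equals the supremum over `s > 0`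
by monotonicity). -/
noncomputable def RDistLInfty [PseudoMetricSpace X] [MeasurableSpace X] (T : X → X)
    (μ : Measure X) (ε : ℝ) : ℝ≥0∞ :=
  ⨆ (s : ℝ) (_ : 0 < s), RDistLInftyS T μ ε s

/-- The `L¹` rate distortion function `R_{μ,1}(ε)`. -/
noncomputable def RDistL1 [PseudoMetricSpace X] [MeasurableSpace X] (T : X → X)
    (μ : Measure X) (ε : ℝ) : ℝ≥0∞ :=
  ⨅ (n : ℕ) (_ : 0 < n) (ν : Measure (X × (Fin n → X))) (_ : IsProbabilityMeasure ν)
    (_ : ν.map Prod.fst = μ) (_ : ∃ S : Finset X, ν {p | ∀ k, p.2 k ∈ S} = 1)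
    (_ : ∫⁻ p, ∑ k : Fin n, ENNReal.ofReal (dist (T^[(k : ℕ)] p.1) (p.2 k)) ∂ν
        < ENNReal.ofReal (ε * n)),
    mutualInfo ν Prod.fst Prod.snd / (n : ℝ≥0∞)

/-- `R^δ_μ(T,n,ε)`: minimal number of Bowen `(n,ε)`-balls whose union has `μ`-measure
greater than `1 - δ`. -/
noncomputable def katokNum [PseudoMetricSpace X] [MeasurableSpace X] (T : X → X)
    (μ : Measure X) (n : ℕ) (ε δ : ℝ) : ℕ :=
  sInf {k | ∃ E : Finset X, E.card = k ∧
    ENNReal.ofReal (1 - δ) < μ (⋃ x ∈ E, {y | bowenDist T n x y < ε})}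

/-- `h̄^K_μ(T,ε,δ)`. -/
noncomputable def katokUpperD [PseudoMetricSpace X] [MeasurableSpace X] (T : X → X)
    (μ : Measure X) (ε δ : ℝ) : ℝ≥0∞ :=
  Filter.limsup (fun n : ℕ => ENNReal.ofReal (Real.log (katokNum T μ n ε δ)) / (n : ℝ≥0∞))
    Filter.atTop

/-- `ḥ^K_μ(T,ε,δ)`. -/
noncomputable def katokLowerD [PseudoMetricSpace X] [MeasurableSpace X] (T : X → X)
    (μ : Measure X) (ε δ : ℝ) : ℝ≥0∞ :=
  Filter.liminf (fun n : ℕ => ENNReal.ofReal (Real.log (katokNum T μ n ε δ)) / (n : ℝ≥0∞))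
    Filter.atTop

/-- `h̄^K_μ(T,ε) = lim_{δ→0} h̄^K_μ(T,ε,δ)` (equal to the supremum over `δ ∈ (0,1)` by
monotonicity). -/
noncomputable def katokUpper [PseudoMetricSpace X] [MeasurableSpace X] (T : X → X)
    (μ : Measure X) (ε : ℝ) : ℝ≥0∞ :=
  ⨆ (δ : ℝ) (_ : δ ∈ Set.Ioo (0 : ℝ) 1), katokUpperD T μ ε δ

/-- `ḥ^K_μ(T,ε) = lim_{δ→0} ḥ^K_μ(T,ε,δ)`. -/
noncomputable def katokLower [PseudoMetricSpace X] [MeasurableSpace X] (T : X → X)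
    (μ : Measure X) (ε : ℝ) : ℝ≥0∞ :=
  ⨆ (δ : ℝ) (_ : δ ∈ Set.Ioo (0 : ℝ) 1), katokLowerD T μ ε δ

/-- The empirical measure `(1/n) Σ_{j=0}^{n-1} δ_{T^j x}`. -/
noncomputable def empMeas [MeasurableSpace X] (T : X → X) (n : ℕ) (x : X) : Measure X :=
  (n : ℝ≥0∞)⁻¹ • ∑ j ∈ Finset.range n, Measure.dirac (T^[j] x)

/-- Pfister–Sullivan entropy `PS_μ(T,d,ε)`: infimum over weak* open neighborhoods `F` of `μ`
of `limsup_n (1/n) log s_n(T,d,ε,X_{n,F})`, where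
`X_{n,F} = {x : (1/n) Σ_{j<n} δ_{T^j x} ∈ F}`. -/
noncomputable def PSent [MetricSpace X] [MeasurableSpace X] [OpensMeasurableSpace X]
    (T : X → X) (μ : ProbabilityMeasure X) (ε : ℝ) : ℝ≥0∞ :=
  ⨅ (F : Set (ProbabilityMeasure X)) (_ : IsOpen F) (_ : μ ∈ F),
    Filter.limsup (fun n : ℕ => ENNReal.ofReal (Real.log (sepNum T n ε
      {x : X | ∃ h : IsProbabilityMeasure (empMeas T n x),
        (⟨empMeas T n x, h⟩ : ProbabilityMeasure X) ∈ F})) / (n : ℝ≥0∞)) Filter.atTop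

/-- Partition entropy `H_μ(P) = Σ_{A∈P} -μ(A) log μ(A)`. -/
noncomputable def entP [MeasurableSpace X] (μ : Measure X) (P : Finset (Set X)) : ℝ≥0∞ :=
  ∑ A ∈ P, ENNReal.ofReal (-((μ A).toReal * Real.log ((μ A).toReal)))

/-- The join `P^n = ∨_{j=0}^{n-1} T^{-j} P`. -/
noncomputable def joinN (T : X → X) (P : Finset (Set X)) (n : ℕ) : Finset (Set X) :=
  letI : DecidableEq (Set X) := Classical.decEq _
  (Fintype.piFinset (fun _ : Fin n => P)).image (fun f => ⋂ j : Fin n, T^[(j : ℕ)] ⁻¹' f j)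

/-- `h_μ(T,P) = lim_n H_μ(P^n)/n` (the limit exists and equals the liminf). -/
noncomputable def entRate [MeasurableSpace X] (T : X → X) (μ : Measure X)
    (P : Finset (Set X)) : ℝ≥0∞ :=
  Filter.liminf (fun n : ℕ => entP μ (joinN T P n) / (n : ℝ≥0∞)) Filter.atTop

/-- `inf { h_μ(T,P) : P a finite Borel partition with diam P ≤ ε }`. -/
noncomputable def infEntRate [PseudoMetricSpace X] [MeasurableSpace X] (T : X → X)
    (μ : Measure X) (ε : ℝ) : ℝ≥0∞ :=
  ⨅ (P : Finset (Set X)) (_ : IsFinPartition P) (_ : ∀ s ∈ P, Metric.diam s ≤ ε),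
    entRate T μ P

/-- Kolmogorov–Sinai entropy `h_μ(T)`. -/
noncomputable def ksEntropy [MeasurableSpace X] (T : X → X) (μ : Measure X) : ℝ≥0∞ :=
  ⨆ (P : Finset (Set X)) (_ : IsFinPartition P), entRate T μ P

/-- A finite open cover. -/
def IsFinOpenCover [TopologicalSpace X] (α : Finset (Set X)) : Prop :=
  (∀ A ∈ α, IsOpen A) ∧ ⋃₀ (α : Set (Set X)) = Set.univ

/-- `ord(β) = max_x #{B ∈ β : x ∈ B} - 1`. -/
noncomputable def ordCover (β : Finset (Set X)) : ℕ :=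
  sSup {k | ∃ x : X, Nat.card {B : Set X // B ∈ β ∧ x ∈ B} = k} - 1

/-- `D(α) = min_{β ≻ α} ord(β)`, over finite open covers `β` refining `α`. -/
noncomputable def Dcover [TopologicalSpace X] (α : Finset (Set X)) : ℕ :=
  sInf {k | ∃ β : Finset (Set X), IsFinOpenCover β ∧ (∀ B ∈ β, ∃ A ∈ α, B ⊆ A) ∧
    ordCover β = k}

/-- Mean (topological) dimension `mdim(X,T) = sup_α lim_n D(α^n)/n`. -/
noncomputable def mdimTop [TopologicalSpace X] (T : X → X) : ℝ≥0∞ :=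
  ⨆ (α : Finset (Set X)) (_ : IsFinOpenCover α),
    Filter.liminf (fun n : ℕ => (Dcover (joinN T α n) : ℝ≥0∞) / (n : ℝ≥0∞)) Filter.atTop

/-- The marker property for a homeomorphism. -/
def MarkerProperty [TopologicalSpace X] (T : X ≃ₜ X) : Prop :=
  ∀ N : ℕ, 0 < N → ∃ U : Set X, IsOpen U ∧
    (∀ n : ℕ, 1 ≤ n → n ≤ N → U ∩ (⇑T)^[n] '' U = ∅) ∧
    ⋃ n : ℤ, ⇑(T.toEquiv ^ n) '' U = Set.univ

/-- Upper dimension `limsup_{ε→0} F(μ,ε)/log(1/ε)` associated with a candidate `F`. -/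
noncomputable def dimFUpper [MeasurableSpace X] (F : Measure X → ℝ → ℝ≥0∞)
    (μ : Measure X) : ℝ≥0∞ :=
  Filter.limsup (fun ε : ℝ => F μ ε / ENNReal.ofReal (Real.log (1 / ε)))
    (nhdsWithin 0 (Set.Ioi 0))

/-- Lower dimension `liminf_{ε→0} F(μ,ε)/log(1/ε)` associated with a candidate `F`. -/
noncomputable def dimFLower [MeasurableSpace X] (F : Measure X → ℝ → ℝ≥0∞)
    (μ : Measure X) : ℝ≥0∞ :=
  Filter.liminf (fun ε : ℝ => F μ ε / ENNReal.ofReal (Real.log (1 / ε)))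
    (nhdsWithin 0 (Set.Ioi 0))

/-- A candidate function: for each invariant probability measure `μ`, `F(μ,·)` is
non-decreasing as `ε` decreases, and `F(μ,ε) → h_μ(T)` as `ε → 0⁺`. -/
def IsCandidate [MeasurableSpace X] (T : X → X) (F : Measure X → ℝ → ℝ≥0∞) : Prop :=
  ∀ μ : Measure X, IsProbabilityMeasure μ → MeasurePreserving T μ μ →
    (∀ ε₁ ε₂ : ℝ, 0 < ε₁ → ε₁ ≤ ε₂ → F μ ε₂ ≤ F μ ε₁) ∧
    Filter.Tendsto (F μ) (nhdsWithin 0 (Set.Ioi 0)) (nhds (ksEntropy T μ))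

end MMD

open MMD

theorem aux_sum {Y : Type*} [MeasurableSpace Y] (μ : Measure Y) [IsProbabilityMeasure μ]
    (p : Finset (Set Y)) (hp : IsFinPartition p) (B : Set Y) (hB : MeasurableSet B) :
    ∑ a ∈ p, (μ (a ∩ B)).toReal = (μ B).toReal := by
  obtain ⟨h1, h2, h3⟩ := hp
  rw [← ENNReal.toReal_sum (fun a _ => measure_ne_top μ _)]
  congr 1
  rw [← measure_biUnion_finset (s := p) (f := fun a => a ∩ B)]
  · congr 1
    ext x
    have hx : x ∈ ⋃₀ (p : Set (Set Y)) := by rw [h3]; trivial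
    obtain ⟨a, ha, hxa⟩ := hx
    simp only [mem_iUnion, mem_inter_iff]
    constructor
    · rintro ⟨_, _, _, h⟩
      exact h
    · intro h
      exact ⟨a, ha, hxa, h⟩
  · intro a ha b hb hab
    exact (h2 a ha b hb hab).mono inter_subset_left inter_subset_left
  · intro a ha
    exact (h1 a ha).inter hB

theorem aux_preimage {Y Z : Type*} [MeasurableSpace Y] [MeasurableSpace Z]
    (μ : Measure Y) [IsProbabilityMeasure μ] (f : Y → Z) (hf : Measurable f)
    (q : Finset (Set Z)) (hq : IsFinPartition q) (B : Set Y) (hB : MeasurableSet B) :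
    ∑ t ∈ q, (μ (B ∩ f ⁻¹' t)).toReal = (μ B).toReal := by
  obtain ⟨h1, h2, h3⟩ := hq
  rw [← ENNReal.toReal_sum (fun a _ => measure_ne_top μ _)]
  congr 1
  rw [← measure_biUnion_finset (s := q) (f := fun t => B ∩ f ⁻¹' t)]
  · congr 1
    ext x
    have hx : f x ∈ ⋃₀ (q : Set (Set Z)) := by rw [h3]; trivial
    obtain ⟨a, ha, hxa⟩ := hx
    simp only [mem_iUnion, mem_inter_iff]
    constructor
    · rintro ⟨_, _, h, _⟩
      exact h
    · intro h
      exact ⟨a, ha, h, hxa⟩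
  · intro a ha b hb hab
    exact ((h2 a ha b hb hab).preimage f).mono inter_subset_right inter_subset_right
  · intro a ha
    exact hB.inter (hf (h1 a ha))

theorem aux_log (a b c : ℝ) (ha : 0 ≤ a) (hab : a ≤ b) (hac : a ≤ c) :
    a * Real.log (a / (b * c)) ≤ -(a * Real.log c) := by
  rcases ha.eq_or_lt with h | h
  · simp [← h]
  · have hb : 0 < b := h.trans_le hab
    have hc : 0 < c := h.trans_le hac
    rw [Real.log_div h.ne' (by positivity), Real.log_mul hb.ne' hc.ne']
    have := Real.log_le_log h hab
    nlinarith

theorem aux_info {Y Z : Type*} [MeasurableSpace Y] [MeasurableSpace Z]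
    (μ : Measure Y) [IsProbabilityMeasure μ] (f : Y → Z) (hf : Measurable f)
    (Q : Finset (Set Y)) (hQ : IsFinPartition Q)
    (hc : ∀ A ∈ Q, ∀ x ∈ A, ∀ y ∈ A, f x = f y) :
    mutualInfo (μ.map (fun x => (x, f x))) Prod.fst Prod.snd ≤ entP μ Q := by
  have hm : Measurable (fun x => (x, f x)) := measurable_id.prodMk hf
  unfold mutualInfo
  refine iSup_le fun p => iSup_le fun hp => iSup_le fun q => iSup_le fun hq => ?_
  unfold entP
  rw [← ENNReal.ofReal_sum_of_nonneg]
  swap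
  · intro A _
    have h1 : (μ A).toReal ≤ 1 := ENNReal.toReal_le_of_le_ofReal zero_le_one (by simpa using prob_le_one)
    have := Real.log_nonpos ENNReal.toReal_nonneg h1
    have h0 : 0 ≤ (μ A).toReal := ENNReal.toReal_nonneg
    nlinarith
  apply ENNReal.ofReal_le_ofReal
  have e1 : ∀ a ∈ p, (μ.map (fun x => (x, f x))) (Prod.fst ⁻¹' a) = μ a := by
    intro a ha
    rw [Measure.map_apply hm (measurable_fst (hp.1 a ha))]
    rfl
  have e2 : ∀ t ∈ q, (μ.map (fun x => (x, f x))) (Prod.snd ⁻¹' t) = μ (f ⁻¹' t) := by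
    intro t ht
    rw [Measure.map_apply hm (measurable_snd (hq.1 t ht))]
    rfl
  have e3 : ∀ a ∈ p, ∀ t ∈ q, (μ.map (fun x => (x, f x))) (Prod.fst ⁻¹' a ∩ Prod.snd ⁻¹' t)
      = μ (a ∩ f ⁻¹' t) := by
    intro a ha t ht
    rw [Measure.map_apply hm ((measurable_fst (hp.1 a ha)).inter (measurable_snd (hq.1 t ht)))]
    rfl
  calc _ ≤ ∑ a ∈ p, ∑ t ∈ q, -((μ (a ∩ f ⁻¹' t)).toReal * Real.log (μ (f ⁻¹' t)).toReal) := by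
        refine Finset.sum_le_sum fun a ha => Finset.sum_le_sum fun t ht => ?_
        rw [e1 a ha, e2 t ht, e3 a ha t ht]
        exact aux_log _ _ _ ENNReal.toReal_nonneg
          (ENNReal.toReal_mono (measure_ne_top _ _) (measure_mono inter_subset_left))
          (ENNReal.toReal_mono (measure_ne_top _ _) (measure_mono inter_subset_right))
    _ = ∑ t ∈ q, ∑ A ∈ Q, -((μ (A ∩ f ⁻¹' t)).toReal * Real.log (μ (f ⁻¹' t)).toReal) := by
        rw [Finset.sum_comm]
        refine Finset.sum_congr rfl fun t ht => ?_
        rw [Finset.sum_neg_distrib, Finset.sum_neg_distrib, ← Finset.sum_mul, ← Finset.sum_mul,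
          aux_sum μ p hp _ (hf (hq.1 t ht)), aux_sum μ Q hQ _ (hf (hq.1 t ht))]
    _ ≤ ∑ t ∈ q, ∑ A ∈ Q, -((μ (A ∩ f ⁻¹' t)).toReal * Real.log (μ A).toReal) := by
        refine Finset.sum_le_sum fun t ht => Finset.sum_le_sum fun A hA => ?_
        rcases (A ∩ f ⁻¹' t).eq_empty_or_nonempty with h | ⟨x, hxA, hxt⟩
        · simp [h]
        · have hsub : A ⊆ f ⁻¹' t := by
            intro y hy
            have := hc A hA x hxA y hy
            simpa [mem_preimage, ← this] using hxt
          rw [inter_eq_left.2 hsub]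
          rcases (ENNReal.toReal_nonneg (a := μ A)).eq_or_lt with h | h
          · simp [← h]
          · have h2 := Real.log_le_log h
              (ENNReal.toReal_mono (measure_ne_top μ _) (measure_mono hsub))
            nlinarith
    _ = _ := by
        rw [Finset.sum_comm]
        refine Finset.sum_congr rfl fun A hA => ?_
        rw [Finset.sum_neg_distrib, ← Finset.sum_mul, aux_preimage μ f hf q hq _ (hQ.1 A hA)]

theorem aux_join {X : Type*} [MeasurableSpace X] (T : X → X) (hT : Measurable T)
    (P : Finset (Set X)) (hP : IsFinPartition P) (n : ℕ) : IsFinPartition (joinN T P n) := by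
  obtain ⟨h1, h2, h3⟩ := hP
  refine ⟨?_, ?_, ?_⟩
  · intro A hA
    simp only [joinN, Finset.mem_image, Fintype.mem_piFinset] at hA
    obtain ⟨F, hF, rfl⟩ := hA
    exact MeasurableSet.iInter fun j => (hT.iterate j) (h1 _ (hF j))
  · intro A hA B hB hAB
    simp only [joinN, Finset.mem_image, Fintype.mem_piFinset] at hA hB
    obtain ⟨F, hF, rfl⟩ := hA
    obtain ⟨G, hG, rfl⟩ := hB
    rw [Set.disjoint_left]
    intro x hx hy
    apply hAB
    have : F = G := by
      funext j
      by_contra hne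
      exact Set.disjoint_left.1 (h2 _ (hF j) _ (hG j) hne) (mem_iInter.1 hx j) (mem_iInter.1 hy j)
    rw [this]
  · refine eq_univ_of_forall fun x => ?_
    have h : ∀ y, ∃ A ∈ P, y ∈ A := by
      intro y
      have hy : y ∈ ⋃₀ (P : Set (Set X)) := by rw [h3]; trivial
      obtain ⟨A, hA, hyA⟩ := hy
      exact ⟨A, hA, hyA⟩
    choose c hc hxc using h
    refine ⟨⋂ j : Fin n, T^[(j : ℕ)] ⁻¹' c (T^[(j : ℕ)] x), ?_, ?_⟩
    · simp only [joinN, Finset.coe_image, mem_image, Finset.mem_coe, Fintype.mem_piFinset]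
      exact ⟨fun j => c (T^[(j : ℕ)] x), fun j => hc _, rfl⟩
    · exact mem_iInter.2 fun j => hxc _

/-- Key step in Proposition 3.4: for a finite Borel partition `P` with `diam P ≤ ε` and every
`s > 0`, `R_{μ,L∞}(2ε,s) ≤ h_μ(T,P)`. -/
theorem stmt10 {X : Type*} [MetricSpace X] [CompactSpace X] [MeasurableSpace X] [BorelSpace X]
    (T : X → X) (hT : Continuous T)
    (μ : Measure X) (hμp : IsProbabilityMeasure μ) (hμinv : MeasurePreserving T μ μ)
    (ε : ℝ) (hε : 0 < ε)
    (P : Finset (Set X)) (hP : IsFinPartition P) (hPdiam : ∀ A ∈ P, Metric.diam A ≤ ε)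
    (s : ℝ) (hs : 0 < s) :
    RDistLInftyS T μ (2 * ε) s ≤ entRate T μ P := by
  obtain ⟨h1, h2, h3⟩ := id hP
  have hTm : Measurable T := hT.measurable
  have hne : Nonempty X := nonempty_of_isProbabilityMeasure μ
  have h : ∀ y, ∃ A ∈ P, y ∈ A := by
    intro y
    have hy : y ∈ ⋃₀ (P : Set (Set X)) := by rw [h3]; trivial
    obtain ⟨A, hA, hyA⟩ := hy
    exact ⟨A, hA, hyA⟩
  choose c hcP hxc using h
  have hcA : ∀ A ∈ P, ∀ x ∈ A, c x = A := by
    intro A hA x hx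
    by_contra hne
    exact Set.disjoint_left.1 (h2 _ (hcP x) _ hA hne) (hxc x) hx
  have hpick : ∀ A : Set X, ∃ y, A.Nonempty → y ∈ A := by
    intro A
    rcases A.eq_empty_or_nonempty with rfl | ⟨y, hy⟩
    · exact ⟨Classical.arbitrary X, fun h => absurd h (by simp)⟩
    · exact ⟨y, fun _ => hy⟩
  choose pick hpick using hpick
  have hg : Measurable (fun x => pick (c x)) := by
    intro S _
    have : (fun x => pick (c x)) ⁻¹' S = ⋃ A ∈ {A | A ∈ P ∧ pick A ∈ S}, A := by
      ext x
      simp only [mem_preimage, mem_iUnion, mem_setOf_eq]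
      constructor
      · intro hx
        exact ⟨c x, ⟨hcP x, hx⟩, hxc x⟩
      · rintro ⟨A, ⟨hA, hS⟩, hx⟩
        rw [hcA A hA x hx]
        exact hS
    rw [this]
    exact Set.Finite.measurableSet_biUnion (P.finite_toSet.subset fun A hA => hA.1)
      fun A hA => h1 A hA.1
  have hd : ∀ x, dist x (pick (c x)) < 2 * ε := by
    intro x
    have : dist x (pick (c x)) ≤ Metric.diam (c x) :=
      Metric.dist_le_diam_of_mem (Metric.isBounded_of_compactSpace) (hxc x) (hpick _ ⟨x, hxc x⟩)
    have := hPdiam _ (hcP x)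
    linarith
  unfold entRate
  refine le_liminf_of_le (by isBoundedDefault) ?_
  filter_upwards [eventually_gt_atTop 0] with n hn
  set f : X → (Fin n → X) := fun x k => pick (c (T^[(k : ℕ)] x)) with hf
  have hfm : Measurable f := measurable_pi_lambda _ fun k => hg.comp (hTm.iterate k)
  have hm : Measurable (fun x => (x, f x)) := measurable_id.prodMk hfm
  unfold RDistLInftyS
  refine iInf_le_of_le n <| iInf_le_of_le hn <| iInf_le_of_le (μ.map (fun x => (x, f x))) <|
    iInf_le_of_le (Measure.isProbabilityMeasure_map hm.aemeasurable) <| iInf_le_of_le ?_ <|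
    iInf_le_of_le ?_ <| iInf_le_of_le ?_ ?_
  · rw [Measure.map_map measurable_fst hm]
    exact Measure.map_id
  · classical
    refine ⟨P.image pick, ?_⟩
    have hms : MeasurableSet {p : X × (Fin n → X) | ∀ k, p.2 k ∈ P.image pick} := by
      rw [setOf_forall]
      exact MeasurableSet.iInter fun k =>
        ((measurable_pi_apply k).comp measurable_snd) (P.image pick).measurableSet
    rw [Measure.map_apply hm hms]
    have : (fun x => (x, f x)) ⁻¹' {p : X × (Fin n → X) | ∀ k, p.2 k ∈ P.image pick} = univ :=
      eq_univ_of_forall fun x k => Finset.mem_image_of_mem _ (hcP _)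
    rw [this, measure_univ]
  · refine lt_of_le_of_lt (lintegral_map_le _ _) ?_
    have : ∀ x, Nat.card {k : Fin n // 2 * ε ≤ dist (T^[(k : ℕ)] x) (f x k)} = 0 := by
      intro x
      have : IsEmpty {k : Fin n // 2 * ε ≤ dist (T^[(k : ℕ)] x) (f x k)} :=
        ⟨fun k => absurd k.2 (not_le.2 (hd _))⟩
      exact Nat.card_of_isEmpty
    simp only [this, Nat.cast_zero, lintegral_zero]
    rw [ENNReal.ofReal_pos]
    positivity
  · refine ENNReal.div_le_div_right ?_ _
    refine aux_info μ f hfm _ (aux_join T hTm P hP n) ?_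
    intro A hA x hx y hy
    simp only [joinN, Finset.mem_image, Fintype.mem_piFinset] at hA
    obtain ⟨F, hF, rfl⟩ := hA
    funext k
    simp only [hf]
    rw [hcA _ (hF k) _ (mem_iInter.1 hx k), hcA _ (hF k) _ (mem_iInter.1 hy k)]
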